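/- Let α, β be real numbers with α > -1/2 and β > -1/2, let δ > 0 be real, let n ∈ ℕ (n ≥ 0), and let t ∈ (0, π]. Then F_n^{(α+1,β),δ}(t) = A_n^{β,α} F_n^{(α,β),δ}(t) - B_n^{α,β} F_{n+1}^{(α,β),δ}(t), where A_n^{β,α} = (n + α + 1/2)/(2n + α + β + 1) and B_n^{α,β} = (n + 1)/(2n + α + β + 1). -/

import Mathlib

open MeasureTheory Real Set

/-- Generalized binomial coefficient `C(u, v) = Γ(u+1) / (Γ(v+1) Γ(u-v+1))`. -/
noncomputable def genBinom (u v : ℝ) : ℝ :=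
  Real.Gamma (u + 1) / (Real.Gamma (v + 1) * Real.Gamma (u - v + 1))

/-- Jacobi polynomial `P_n^{(a,b)}(x)`. -/
noncomputable def jacobiP (n : ℕ) (a b x : ℝ) : ℝ :=
  ∑ k ∈ Finset.range (n + 1),
    genBinom ((n : ℝ) + a) ((n : ℝ) - (k : ℝ)) * genBinom ((n : ℝ) + b) (k : ℝ) *
      ((x - 1) / 2) ^ k * ((x + 1) / 2) ^ (n - k)

/-- `F_n^{(α,β),δ}(t)`. -/
noncomputable def FJ (n : ℕ) (α β δ t : ℝ) : ℝ :=
  ∫ θ in (0:ℝ)..t, (t - θ) ^ δ * jacobiP n (α - 1/2) (β - 1/2) (Real.cos θ) *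
    (Real.sin (θ / 2)) ^ (2 * α) * (Real.cos (θ / 2)) ^ (2 * β)

noncomputable def jc (n : ℕ) (a b : ℝ) (k : ℕ) : ℝ :=
  genBinom ((n : ℝ) + a) ((n : ℝ) - (k : ℝ)) * genBinom ((n : ℝ) + b) (k : ℝ)

lemma jc_last (n : ℕ) (a b : ℝ) : jc n a b (n + 1) = 0 := by
  unfold jc genBinom
  have : (n : ℝ) - ((n + 1 : ℕ) : ℝ) + 1 = 0 := by push_cast; ring
  rw [this, Real.Gamma_zero]; simp

lemma jc_zero (n : ℕ) (a b : ℝ) (ha : -1 < a) (hb : -1 < b) :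
    ((n : ℝ) + a + 1) * jc n a b 0 = ((n : ℝ) + 1) * jc (n + 1) a b 0 := by
  unfold jc genBinom
  have hn : (0 : ℝ) ≤ n := n.cast_nonneg
  have e1 : Gamma (((n + 1 : ℕ) : ℝ) + a + 1) = (n + a + 1) * Gamma (n + a + 1) := by
    rw [← Real.Gamma_add_one (by linarith)]; congr 1; push_cast; ring
  have e2 : Gamma (((n + 1 : ℕ) : ℝ) + b + 1) = (n + b + 1) * Gamma (n + b + 1) := by
    rw [← Real.Gamma_add_one (by linarith)]; congr 1; push_cast; ring
  have e3 : Gamma (((n + 1 : ℕ) : ℝ) + 1) = (n + 1) * Gamma ((n : ℝ) + 1) := by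
    rw [← Real.Gamma_add_one (by linarith)]; congr 1; push_cast; ring
  have e4 : (n : ℝ) + a - n + 1 = a + 1 := by ring
  have e5 : ((n + 1 : ℕ) : ℝ) + a - (n + 1 : ℕ) + 1 = a + 1 := by ring
  simp only [Nat.cast_zero, sub_zero, zero_add, Real.Gamma_one, one_mul, e4, e5, e1, e2, e3]
  have p1 := Real.Gamma_pos_of_pos (s := (n : ℝ) + b + 1) (by linarith)
  have p2 := Real.Gamma_pos_of_pos (s := (n : ℝ) + 1) (by linarith)
  have p3 := Real.Gamma_pos_of_pos (s := a + 1) (by linarith)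
  have p4 : 0 < (n : ℝ) + b + 1 := by linarith
  field_simp

lemma jc_rec (n : ℕ) (a b : ℝ) (ha : -1 < a) (hb : -1 < b) (j : ℕ) (hj : j ≤ n) :
    -(2 * (n : ℝ) + a + b + 2) * jc n (a + 1) b j =
      ((n : ℝ) + a + 1) * (jc n a b (j + 1) - jc n a b j) - ((n : ℝ) + 1) * jc (n + 1) a b (j + 1) := by
  have hn : (0 : ℝ) ≤ n := n.cast_nonneg
  have hj0 : (0 : ℝ) ≤ j := j.cast_nonneg
  have hjn : (j : ℝ) ≤ n := by exact_mod_cast hj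
  have e1 : Gamma (((n + 1 : ℕ) : ℝ) + a + 1) = (n + a + 1) * Gamma (n + a + 1) := by
    rw [← Real.Gamma_add_one (by linarith)]; congr 1; push_cast; ring
  have e1' : Gamma ((n : ℝ) + (a + 1) + 1) = (n + a + 1) * Gamma (n + a + 1) := by
    rw [← Real.Gamma_add_one (by linarith)]; congr 1; ring
  have e2 : Gamma (((n + 1 : ℕ) : ℝ) + b + 1) = (n + b + 1) * Gamma (n + b + 1) := by
    rw [← Real.Gamma_add_one (by linarith)]; congr 1; push_cast; ring
  have e3 : Gamma (((j + 1 : ℕ) : ℝ) + 1) = (j + 1) * Gamma ((j : ℝ) + 1) := by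
    rw [← Real.Gamma_add_one (by linarith)]; congr 1; push_cast; ring
  have e4 : Gamma ((n : ℝ) + a - (n - j) + 1) = Gamma (a + j + 1) := by congr 1; ring
  have e5 : Gamma ((n : ℝ) + (a + 1) - (n - j) + 1) = (a + j + 1) * Gamma (a + j + 1) := by
    rw [← Real.Gamma_add_one (by linarith)]; congr 1; ring
  have e6 : Gamma (((n + 1 : ℕ) : ℝ) + a - ((n + 1 : ℕ) - (j + 1 : ℕ)) + 1)
      = (a + j + 1) * Gamma (a + j + 1) := by
    rw [← Real.Gamma_add_one (by linarith)]; congr 1; push_cast; ring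
  have e7 : Gamma ((n : ℝ) + a - (n - (j + 1 : ℕ)) + 1)
      = (a + j + 1) * Gamma (a + j + 1) := by
    rw [← Real.Gamma_add_one (by linarith)]; congr 1; push_cast; ring
  have e8 : Gamma (((n + 1 : ℕ) : ℝ) - (j + 1 : ℕ) + 1) = Gamma ((n : ℝ) - j + 1) := by
    congr 1; push_cast; ring
  have e9 : Gamma (((n + 1 : ℕ) : ℝ) + b - (j + 1 : ℕ) + 1) = Gamma ((n : ℝ) + b - j + 1) := by
    congr 1; push_cast; ring
  have p0 := Real.Gamma_pos_of_pos (s := (n : ℝ) + a + 1) (by linarith)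
  have p1 := Real.Gamma_pos_of_pos (s := (n : ℝ) + b + 1) (by linarith)
  have p2 := Real.Gamma_pos_of_pos (s := (j : ℝ) + 1) (by linarith)
  have p3 := Real.Gamma_pos_of_pos (s := a + j + 1) (by linarith)
  have p4 : 0 < a + j + 1 := by linarith
  rcases hj.eq_or_lt with h | h
  · subst h
    rw [jc_last]
    unfold jc genBinom
    simp only [e1, e1', e2, e3, e4, e5, e6, e7, e8, e9]
    have f1 : Gamma ((j : ℝ) - j + 1) = 1 := by simp
    have f2 : Gamma ((j : ℝ) + b - j + 1) = Gamma (b + 1) := by congr 1; ring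
    have p5 := Real.Gamma_pos_of_pos (s := b + 1) (by linarith)
    rw [f1, f2]
    field_simp
    ring
  · have hjn' : (j : ℝ) + 1 ≤ n := by exact_mod_cast h
    unfold jc genBinom
    have f1 : Gamma ((n : ℝ) - j + 1) = (n - j) * Gamma ((n : ℝ) - j) :=
      Real.Gamma_add_one (by linarith)
    have f2 : Gamma ((n : ℝ) + b - j + 1) = (n + b - j) * Gamma ((n : ℝ) + b - j) :=
      Real.Gamma_add_one (by linarith)
    have f3 : Gamma ((n : ℝ) - (j + 1 : ℕ) + 1) = Gamma ((n : ℝ) - j) := by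
      congr 1; push_cast; ring
    have f4 : Gamma ((n : ℝ) + b - (j + 1 : ℕ) + 1) = Gamma ((n : ℝ) + b - j) := by
      congr 1; push_cast; ring
    simp only [e1, e1', e2, e3, e4, e5, e6, e7, e8, e9, f1, f2, f3, f4]
    have p5 := Real.Gamma_pos_of_pos (s := (n : ℝ) - j) (by linarith)
    have p6 := Real.Gamma_pos_of_pos (s := (n : ℝ) + b - j) (by linarith)
    have p7 : 0 < (n : ℝ) - j := by linarith
    have p8 : 0 < (n : ℝ) + b - j := by linarith
    field_simp
    ring

lemma jacobi_id (n : ℕ) (a b : ℝ) (ha : -1 < a) (hb : -1 < b) (x : ℝ) :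
    (2 * (n : ℝ) + a + b + 2) * ((1 - x) / 2 * jacobiP n (a + 1) b x) =
      ((n : ℝ) + a + 1) * jacobiP n a b x - ((n : ℝ) + 1) * jacobiP (n + 1) a b x := by
  obtain ⟨u, hu⟩ : ∃ u, u = (x - 1) / 2 := ⟨_, rfl⟩
  obtain ⟨v, hv⟩ : ∃ v, v = (x + 1) / 2 := ⟨_, rfl⟩
  have huv : v - u = 1 := by rw [hu, hv]; ring
  have hP : ∀ m a b, jacobiP m a b x = ∑ k ∈ Finset.range (m + 1), jc m a b k * u ^ k * v ^ (m - k) := by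
    intro m a b; rw [hu, hv]; rfl
  have hw : (1 - x) / 2 = -u := by rw [hu]; ring
  have hv1 : v * jacobiP n a b x =
      (∑ j ∈ Finset.range (n + 1), jc n a b (j + 1) * u ^ (j + 1) * v ^ (n - j))
        + jc n a b 0 * v ^ (n + 1) := by
    have : v * jacobiP n a b x = ∑ k ∈ Finset.range (n + 1 + 1), jc n a b k * u ^ k * v ^ (n + 1 - k) := by
      rw [Finset.sum_range_succ, jc_last, hP, Finset.mul_sum]
      simp only [zero_mul, add_zero]
      refine Finset.sum_congr rfl fun k hk => ?_
      have : k ≤ n := by simpa [Nat.lt_succ_iff] using hk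
      rw [Nat.sub_add_comm this, pow_succ]; ring
    rw [this, Finset.sum_range_succ']
    simp
  have hP1 : jacobiP (n + 1) a b x =
      (∑ j ∈ Finset.range (n + 1), jc (n + 1) a b (j + 1) * u ^ (j + 1) * v ^ (n - j))
        + jc (n + 1) a b 0 * v ^ (n + 1) := by
    rw [hP, Finset.sum_range_succ']
    simp
  have h1 : jacobiP n a b x = v * jacobiP n a b x - u * jacobiP n a b x := by
    rw [← sub_mul, huv, one_mul]
  have key : ∑ j ∈ Finset.range (n + 1), (-(2 * (n : ℝ) + a + b + 2) * jc n (a + 1) b j) * u ^ (j+1) * v ^ (n - j)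
     = ∑ j ∈ Finset.range (n + 1), (((n : ℝ) + a + 1) * (jc n a b (j + 1) - jc n a b j) - ((n : ℝ) + 1) * jc (n + 1) a b (j + 1)) * u ^ (j+1) * v ^ (n - j) := by
    refine Finset.sum_congr rfl fun k hk => ?_
    have : k ≤ n := by simpa [Nat.lt_succ_iff] using hk
    rw [jc_rec n a b ha hb k this]
  have hl : (2 * (n : ℝ) + a + b + 2) * ((1 - x) / 2 * jacobiP n (a + 1) b x) =
     ∑ j ∈ Finset.range (n + 1), (-(2 * (n : ℝ) + a + b + 2) * jc n (a + 1) b j) * u ^ (j+1) * v ^ (n - j) := by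
    rw [hw, hP, Finset.mul_sum, Finset.mul_sum]
    refine Finset.sum_congr rfl fun k hk => ?_
    ring
  have hr : ∑ j ∈ Finset.range (n + 1), (((n : ℝ) + a + 1) * (jc n a b (j + 1) - jc n a b j) - ((n : ℝ) + 1) * jc (n + 1) a b (j + 1)) * u ^ (j+1) * v ^ (n - j)
    = (n + a + 1) * (∑ j ∈ Finset.range (n + 1), jc n a b (j + 1) * u ^ (j + 1) * v ^ (n - j))
      - (n + a + 1) * (u * jacobiP n a b x)
      - (n + 1) * (∑ j ∈ Finset.range (n + 1), jc (n + 1) a b (j + 1) * u ^ (j + 1) * v ^ (n - j)) := by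
    rw [hP]
    simp only [Finset.mul_sum]
    rw [← Finset.sum_sub_distrib, ← Finset.sum_sub_distrib]
    refine Finset.sum_congr rfl fun k hk => ?_
    ring
  rw [hl, key, hr]
  linear_combination (-((n : ℝ) + a + 1)) * h1 - ((n : ℝ) + a + 1) * hv1 + ((n : ℝ) + 1) * hP1 + (-v ^ (n + 1)) * jc_zero n a b ha hb

lemma rpow_le_aux (x p r : ℝ) (hx0 : 0 < x) (hx : x ≤ 1) (hp : r ≤ p) : x ^ p ≤ x ^ r :=
  Real.rpow_le_rpow_of_exponent_ge hx0 hx hp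

lemma weight_int (α β : ℝ) (hα : -1/2 < α) (hβ : -1/2 < β) :
    IntervalIntegrable (fun θ : ℝ => (Real.sin (θ / 2)) ^ (2 * α) * (Real.cos (θ / 2)) ^ (2 * β))
      volume 0 π := by
  obtain ⟨p, hp1, hp0, hpα⟩ : ∃ p : ℝ, -1 < p ∧ p ≤ 0 ∧ p ≤ 2 * α :=
    ⟨min 0 (2 * α), lt_min (by norm_num) (by linarith), min_le_left _ _, min_le_right _ _⟩
  obtain ⟨q, hq1, hq0, hqβ⟩ : ∃ q : ℝ, -1 < q ∧ q ≤ 0 ∧ q ≤ 2 * β :=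
    ⟨min 0 (2 * β), lt_min (by norm_num) (by linarith), min_le_left _ _, min_le_right _ _⟩
  have hpi := Real.pi_pos
  have i1 : IntervalIntegrable (fun θ : ℝ => (θ / π) ^ p) volume 0 π := by
    have := (intervalIntegral.intervalIntegrable_rpow' (a := 0) (b := 1) hp1).comp_mul_right (c := π⁻¹)
    simpa [div_eq_mul_inv] using this
  have i2 : IntervalIntegrable (fun θ : ℝ => ((π - θ) / π) ^ q) volume 0 π := by
    have h := (intervalIntegral.intervalIntegrable_rpow' (a := 0) (b := 1) hq1).comp_mul_right (c := π⁻¹)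
    have h' := (h.comp_sub_left π).symm
    simpa [div_eq_mul_inv] using h'
  have i3 := (i1.const_mul 2).add (i2.const_mul 2)
  refine i3.mono_fun' (by fun_prop) ?_
  rw [uIoc_of_le hpi.le]
  have hne : ∀ᵐ θ : ℝ ∂volume.restrict (Ioc 0 π), θ ≠ π :=
    ae_restrict_of_ae (by simp [ae_iff])
  filter_upwards [hne, ae_restrict_mem measurableSet_Ioc] with θ h1 h2
  have h0 := h2.1
  have h3 : θ < π := lt_of_le_of_ne h2.2 h1
  have hs0 : 0 < sin (θ / 2) := Real.sin_pos_of_pos_of_lt_pi (by linarith) (by linarith)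
  have hc0 : 0 < cos (θ / 2) := Real.cos_pos_of_mem_Ioo ⟨by linarith, by linarith⟩
  have hs1 : θ / π ≤ sin (θ / 2) := by
    have := Real.mul_le_sin (x := θ / 2) (by linarith) (by linarith)
    calc θ / π = 2 / π * (θ / 2) := by field_simp
      _ ≤ _ := this
  have hc1 : (π - θ) / π ≤ cos (θ / 2) := by
    have := Real.mul_le_sin (x := (π - θ) / 2) (by linarith) (by linarith)
    rw [show (π - θ) / 2 = π / 2 - θ / 2 by ring, Real.sin_pi_div_two_sub] at this
    calc (π - θ) / π = 2 / π * (π / 2 - θ / 2) := by field_simp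
      _ ≤ _ := this
  have hs2 := Real.sin_le_one (θ / 2)
  have hc2 := Real.cos_le_one (θ / 2)
  have hsc := Real.sin_sq_add_cos_sq (θ / 2)
  have b1 : sin (θ / 2) ^ (2 * α) ≤ sin (θ / 2) ^ p := rpow_le_aux _ _ _ hs0 hs2 hpα
  have b2 : cos (θ / 2) ^ (2 * β) ≤ cos (θ / 2) ^ q := rpow_le_aux _ _ _ hc0 hc2 hqβ
  have b3 : sin (θ / 2) ^ p ≤ (θ / π) ^ p :=
    Real.rpow_le_rpow_of_nonpos (by positivity) hs1 hp0
  have b4 : cos (θ / 2) ^ q ≤ ((π - θ) / π) ^ q :=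
    Real.rpow_le_rpow_of_nonpos (div_pos (by linarith) hpi) hc1 hq0
  have half : ∀ y r : ℝ, 1 / 2 ≤ y → -1 < r → r ≤ 0 → y ^ r ≤ 2 := by
    intro y r hy hr hr0
    calc y ^ r ≤ (1 / 2 : ℝ) ^ r := Real.rpow_le_rpow_of_nonpos (by norm_num) hy hr0
      _ ≤ (1 / 2 : ℝ) ^ (-1 : ℝ) := rpow_le_aux _ _ _ (by norm_num) (by norm_num) hr.le
      _ = 2 := by rw [Real.rpow_neg_one]; norm_num
  have s0 : 0 < sin (θ / 2) ^ p := by positivity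
  have c0 : 0 < cos (θ / 2) ^ q := by positivity
  rw [Real.norm_of_nonneg (by positivity)]
  calc sin (θ / 2) ^ (2 * α) * cos (θ / 2) ^ (2 * β)
      ≤ sin (θ / 2) ^ p * cos (θ / 2) ^ q := by gcongr
    _ ≤ 2 * (θ / π) ^ p + 2 * ((π - θ) / π) ^ q := by
      rcases le_total (1 / 2) (sin (θ / 2)) with h | h
      · have := half _ p h hp1 hp0
        nlinarith
      · have hc : 1 / 2 ≤ cos (θ / 2) := by nlinarith
        have := half _ q hc hq1 hq0
        nlinarith

lemma FJ_int (n : ℕ) (α β δ t : ℝ) (hα : -1/2 < α) (hβ : -1/2 < β)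
    (hδ : 0 < δ) (ht : t ∈ Set.Ioc (0:ℝ) π) :
    IntervalIntegrable (fun θ : ℝ => (t - θ) ^ δ * jacobiP n (α - 1/2) (β - 1/2) (Real.cos θ) *
    (Real.sin (θ / 2)) ^ (2 * α) * (Real.cos (θ / 2)) ^ (2 * β)) volume 0 t := by
  have h := (weight_int α β hα hβ).mono_set (c := 0) (d := t) (by
    rw [uIcc_of_le ht.1.le, uIcc_of_le Real.pi_pos.le]; exact Icc_subset_Icc_right ht.2)
  have hc : Continuous (fun θ : ℝ => (t - θ) ^ δ * jacobiP n (α - 1/2) (β - 1/2) (Real.cos θ)) := by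
    unfold jacobiP
    refine Continuous.mul ((continuous_const.sub continuous_id).rpow_const fun _ => Or.inr hδ.le) ?_
    fun_prop
  have := h.continuousOn_mul hc.continuousOn
  simpa only [mul_assoc] using this

theorem FJ_alpha_recurrence (α β : ℝ) (hα : -1/2 < α) (hβ : -1/2 < β) (δ : ℝ)
    (hδ : 0 < δ) (n : ℕ) (t : ℝ) (ht : t ∈ Set.Ioc (0:ℝ) π) :
    FJ n (α + 1) β δ t =
      ((n : ℝ) + α + 1/2) / (2 * (n : ℝ) + α + β + 1) * FJ n α β δ t -
      ((n : ℝ) + 1) / (2 * (n : ℝ) + α + β + 1) * FJ (n + 1) α β δ t := by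
  have hn : (0 : ℝ) ≤ n := n.cast_nonneg
  have hd : 0 < 2 * (n : ℝ) + α + β + 1 := by linarith
  unfold FJ
  rw [← intervalIntegral.integral_const_mul, ← intervalIntegral.integral_const_mul,
    ← intervalIntegral.integral_sub ((FJ_int n α β δ t hα hβ hδ ht).const_mul _)
      ((FJ_int (n + 1) α β δ t hα hβ hδ ht).const_mul _)]
  refine intervalIntegral.integral_congr_ae (Filter.Eventually.of_forall fun θ hθ => ?_)
  rw [uIoc_of_le ht.1.le] at hθ
  have hs0 : 0 < sin (θ / 2) :=
    Real.sin_pos_of_pos_of_lt_pi (by linarith [hθ.1]) (by linarith [hθ.1, hθ.2, ht.2, Real.pi_pos])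
  have e : sin (θ / 2) ^ (2 * (α + 1)) = sin (θ / 2) ^ (2 * α) * ((1 - cos θ) / 2) := by
    rw [show 2 * (α + 1) = 2 * α + 2 by ring, Real.rpow_add hs0, Real.rpow_two, Real.sin_sq_eq_half_sub]
    rw [show 2 * (θ / 2) = θ by ring]; ring
  have k := jacobi_id n (α - 1/2) (β - 1/2) (by linarith) (by linarith) (cos θ)
  have k2 : (1 - cos θ) / 2 * jacobiP n (α + 1 - 1/2) (β - 1/2) (cos θ) =
      ((n : ℝ) + α + 1/2) / (2 * (n : ℝ) + α + β + 1) * jacobiP n (α - 1/2) (β - 1/2) (cos θ)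
      - ((n : ℝ) + 1) / (2 * (n : ℝ) + α + β + 1) * jacobiP (n + 1) (α - 1/2) (β - 1/2) (cos θ) := by
    rw [show α + 1 - 1/2 = α - 1/2 + 1 by ring]
    generalize jacobiP n (α - 1/2 + 1) (β - 1/2) (cos θ) = X at k ⊢
    generalize jacobiP n (α - 1/2) (β - 1/2) (cos θ) = Y at k ⊢
    generalize jacobiP (n + 1) (α - 1/2) (β - 1/2) (cos θ) = Z at k ⊢
    field_simp
    linear_combination 2 * k
  simp only [e]
  linear_combination ((t - θ) ^ δ * sin (θ / 2) ^ (2 * α) * cos (θ / 2) ^ (2 * β)) * k2
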